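/- For every u ∈ ℂ with 0 < |u| ≤ u_c the following identity holds: A(u) = t_c·u_c·( Δ²A(u) + (Z₁(u_c) + ΔZ₀(u))·ΔA(u) + a₁·(ΔZ(u,u_c) − ΔZ₀(u)) ) + ν_c·t_c·( A(u)/u_c + ((Z₀(u_c) − 1)/u_c + Z₁(u))·A(u) + a₀·((Z(u,u_c) − Z₀(u))/u_c − Z₁(u)) ), where ΔZ₀(u) = (Z₀(u) − 1)/u, ΔA(u) = (A(u) − a₀)/u, Δ²A(u) = (A(u) − a₀ − a₁·u)/u², Z(u,u_c) := Σ_{p,q≥0} z_{p,q}·u^p·u_c^q and ΔZ(u,u_c) := (Z(u,u_c) − Z(0,u_c))/u (these series converge absolutely), Z₀(u_c) := Ẑ₀(1), Z₁(u_c) := Ẑ₁(1), and on the disk |u| ≤ u_c the functions are given by their absolutely convergent power series Z₀(u) = Σ_p z_{p,0}·u^p, Z₁(u) = Σ_p z'_p·u^p (the Taylor coefficients of Z₁), A(u) = Σ_p a_p·u^p. -/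

import Mathlib

noncomputable def nuc : ℝ := 1 + 2 * Real.sqrt 7

noncomputable def tc : ℝ := Real.sqrt 10 / (8 * (7 + Real.sqrt 7) ^ ((3:ℝ)/2))

noncomputable def uc : ℝ := (6/5) * (7 + Real.sqrt 7) * tc

/-- The rational parametrization `û` of the `u`-variable. -/
noncomputable def uhat (H : ℂ) : ℂ :=
  ((uc : ℂ) / 3) * H * (10 - 12 * H + 6 * H ^ 2 - H ^ 3)

/-- The rational parametrization `Ẑ₀`. -/
noncomputable def Z0hat (H : ℂ) : ℂ :=
  (1/10) * (1 - (1 - (Real.sqrt 7 : ℂ)) * H + 3 * H ^ 2 - H ^ 3)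
    * (10 - 12 * H + 6 * H ^ 2 - H ^ 3)

/-- The rational parametrization `Ẑ₁`. -/
noncomputable def Z1hat (H : ℂ) : ℂ :=
  (3 / (10 * (uc : ℂ))) *
    ((Real.sqrt 7 : ℂ) - 1 + H - 3 * (4 - 3 * H + H ^ 2) / (10 - 12 * H + 6 * H ^ 2 - H ^ 3))

/-- The rational parametrization `Â`. -/
noncomputable def Ahat (H : ℂ) : ℂ :=
  (1/10) * ((((3:ℝ)/2) ^ ((7:ℝ)/3) : ℝ) : ℂ) * (9 - 8 * H + 3 * H ^ 2) / (3 - 3 * H + H ^ 2) ^ 2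

/-!
The polynomial `û` increases strictly on `(-∞, 1]`, up to `û(1) = u_c`, where its derivative
vanishes. A function of `u` which becomes analytic in `H` on `(-∞, 1]` through `u = û(H)` is
therefore analytic on `[0, u_c)`. If its Taylor coefficients at `0` are nonnegative, its derivatives
stay nonnegative along this segment, so its Taylor series sums to it there and, by monotone
convergence, also at `u_c`. Absolute convergence on the closed disk `|u| ≤ u_c` follows.

The kernel equation factors in terms of `(H, K)`, and solving it shows that `Z(û(H), û(K))` is
rational in `(H, K)` with no pole on `(-∞, 1) × (-∞, 1]`. Applying the previous argument to `v`,
then to `u`, gives the convergence of `Z(u, u_c)` and a rational parametrization of it. The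
functional equation is then an identity between rational functions of `H`, which proves it on the
segment `[0, u_c]`; the identity theorem carries it to the open disk and continuity to its boundary.
-/

section PowerSeries

open Filter Topology Set

theorem hasFPowerSeriesOnBall_tsum {𝕜 : Type*} [NontriviallyNormedField 𝕜] [CompleteSpace 𝕜]
    {c : ℕ → 𝕜} {r : ℝ} (hr : 0 < r) (hc : Summable fun n => ‖c n‖ * r ^ n) :
    HasFPowerSeriesOnBall (fun x => ∑' n, c n * x ^ n)
      (FormalMultilinearSeries.ofScalars 𝕜 c) 0 (ENNReal.ofReal r) := by
  have hle : ENNReal.ofReal r ≤ (FormalMultilinearSeries.ofScalars 𝕜 c).radius := by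
    refine FormalMultilinearSeries.le_radius_of_summable _ ?_
    simpa [FormalMultilinearSeries.ofScalars_norm, Real.coe_toNNReal _ hr.le] using hc
  have hpos : 0 < ENNReal.ofReal r := ENNReal.ofReal_pos.2 hr
  have hball := (FormalMultilinearSeries.hasFPowerSeriesOnBall _ (hpos.trans_le hle)).mono hpos hle
  refine hball.congr fun x _ => ?_
  simp [FormalMultilinearSeries.sum, mul_comm]

theorem analyticOnNhd_tsum {𝕜 : Type*} [NontriviallyNormedField 𝕜] [CompleteSpace 𝕜]
    {c : ℕ → 𝕜} {r : ℝ} (hr : 0 < r) (hc : Summable fun n => ‖c n‖ * r ^ n) :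
    AnalyticOnNhd 𝕜 (fun x => ∑' n, c n * x ^ n) (Metric.ball 0 r) := by
  rw [← Metric.eball_ofReal]
  exact (hasFPowerSeriesOnBall_tsum hr hc).analyticOnNhd

theorem continuousOn_tsum_closedBall {𝕜 : Type*} [NormedField 𝕜] [CompleteSpace 𝕜] {c : ℕ → 𝕜}
    {r : ℝ} (hc : Summable fun n => ‖c n‖ * r ^ n) :
    ContinuousOn (fun x => ∑' n, c n * x ^ n) (Metric.closedBall 0 r) := by
  refine continuousOn_tsum (fun n => by fun_prop) hc fun n x hx => ?_
  rw [norm_mul, norm_pow]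
  gcongr
  exact mem_closedBall_zero_iff.1 hx

theorem diffContOnCl_tsum {c : ℕ → ℂ} {r : ℝ} (hr : 0 < r)
    (hc : Summable fun n => ‖c n‖ * r ^ n) :
    DiffContOnCl ℂ (fun x => ∑' n, c n * x ^ n) (Metric.ball 0 r) :=
  ⟨(analyticOnNhd_tsum hr hc).differentiableOn, by
    rw [closure_ball 0 hr.ne']
    exact continuousOn_tsum_closedBall hc⟩

theorem eqOn_closedBall_of_frequently_eq {E : Type*} [NormedAddCommGroup E] [NormedSpace ℂ E]
    [CompleteSpace E] {f g : ℂ → E} {x₀ : ℂ} {r : ℝ} (hr : 0 < r)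
    (hf : DiffContOnCl ℂ f (Metric.ball x₀ r)) (hg : DiffContOnCl ℂ g (Metric.ball x₀ r))
    (hfg : ∃ᶠ x in 𝓝[≠] x₀, f x = g x) : EqOn f g (Metric.closedBall x₀ r) := by
  rw [← closure_ball x₀ hr.ne']
  refine EqOn.of_subset_closure ?_ hf.continuousOn hg.continuousOn subset_closure subset_rfl
  exact (hf.differentiableOn.analyticOnNhd Metric.isOpen_ball).eqOn_of_preconnected_of_frequently_eq
    (hg.differentiableOn.analyticOnNhd Metric.isOpen_ball)
    (convex_ball _ _).isPreconnected (Metric.mem_ball_self hr) hfg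

theorem summable_norm_mul_abs_pow {c : ℕ → ℝ} {x : ℝ} (h : Summable fun n => c n * x ^ n) :
    Summable fun n => ‖c n‖ * |x| ^ n := by
  simpa only [norm_mul, norm_pow, Real.norm_eq_abs] using h.norm

theorem hasFPowerSeriesAt_tsum {c : ℕ → ℝ} {x : ℝ} (hx : x ≠ 0)
    (h : Summable fun n => c n * x ^ n) :
    HasFPowerSeriesAt (fun y => ∑' n, c n * y ^ n) (FormalMultilinearSeries.ofScalars ℝ c) 0 :=
  (hasFPowerSeriesOnBall_tsum (abs_pos.2 hx) (summable_norm_mul_abs_pow h)).hasFPowerSeriesAt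

section Coefficients

variable {α : Type*} {l : Filter α} [l.NeBot] {φ : α → ℝ}

theorem hasFPowerSeriesAt_tsum_of_eventually_hasSum {c : ℕ → ℝ} {G : α → ℝ}
    (hφ : Tendsto φ l (𝓝[≠] 0)) (h : ∀ᶠ x in l, HasSum (fun n => c n * φ x ^ n) (G x)) :
    HasFPowerSeriesAt (fun y => ∑' n, c n * y ^ n) (FormalMultilinearSeries.ofScalars ℝ c) 0 := by
  obtain ⟨x, hx, hx0⟩ := (h.and (hφ.eventually self_mem_nhdsWithin)).exists
  exact hasFPowerSeriesAt_tsum hx0 hx.summable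

theorem hasFPowerSeriesAt_of_eventually_hasSum {c : ℕ → ℝ} {g : ℝ → ℝ} (hg : AnalyticAt ℝ g 0)
    (hφ : Tendsto φ l (𝓝[≠] 0)) (h : ∀ᶠ x in l, HasSum (fun n => c n * φ x ^ n) (g (φ x))) :
    HasFPowerSeriesAt g (FormalMultilinearSeries.ofScalars ℝ c) 0 := by
  have hseries := hasFPowerSeriesAt_tsum_of_eventually_hasSum hφ h
  refine hseries.congr ((hseries.analyticAt.frequently_eq_iff_eventually_eq hg).1 ?_)
  exact hφ.frequently (h.mono fun x hx => hx.tsum_eq).frequently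

theorem coeff_eq_of_eventually_hasSum {c d : ℕ → ℝ} {G : α → ℝ} (hφ : Tendsto φ l (𝓝[≠] 0))
    (hc : ∀ᶠ x in l, HasSum (fun n => c n * φ x ^ n) (G x))
    (hd : ∀ᶠ x in l, HasSum (fun n => d n * φ x ^ n) (G x)) : c = d := by
  have hd_series := hasFPowerSeriesAt_tsum_of_eventually_hasSum hφ hd
  have hc_series := hasFPowerSeriesAt_of_eventually_hasSum hd_series.analyticAt hφ
    ((hc.and hd).mono fun x hx => hx.2.tsum_eq ▸ hx.1)
  exact FormalMultilinearSeries.ofScalars_series_injective ℝ ℝ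
    (hc_series.eq_formalMultilinearSeries hd_series)

theorem coeff_zero_eq_and_coeff_one_eq {c : ℕ → ℝ} {q : α → ℝ} {a b : ℝ}
    (hφ : Tendsto φ l (𝓝[≠] 0)) (hq : Tendsto q l (𝓝 b))
    (h : ∀ᶠ x in l, HasSum (fun n => c n * φ x ^ n) (a + φ x * q x)) : c 0 = a ∧ c 1 = b := by
  have hderiv := (hasFPowerSeriesAt_tsum_of_eventually_hasSum hφ h).hasDerivAt
  have hvalue : ∑' n, c n * (0 : ℝ) ^ n = c 0 := by
    rw [tsum_eq_single 0 fun n hn => by simp [hn]]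
    simp
  have hφ0 := hφ.mono_right nhdsWithin_le_nhds
  have hcoeff_zero : c 0 = a := by
    have hleft := hderiv.continuousAt.tendsto.comp hφ0
    have hright := (hφ0.mul hq).const_add a
    rw [hvalue] at hleft
    rw [zero_mul, add_zero] at hright
    exact tendsto_nhds_unique hleft (hright.congr' (h.mono fun x hx => hx.tsum_eq.symm))
  have hslope := (hasDerivAt_iff_tendsto_slope.1 hderiv).comp hφ
  rw [FormalMultilinearSeries.ofScalars_apply_eq] at hslope
  refine ⟨hcoeff_zero, tendsto_nhds_unique (by simpa using hslope) (hq.congr' ?_)⟩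
  filter_upwards [h, hφ.eventually self_mem_nhdsWithin] with x hx hx0
  rw [Function.comp_apply, slope_def_field, hvalue, hx.tsum_eq, hcoeff_zero, sub_zero,
    add_sub_cancel_left, mul_div_cancel_left₀ _ hx0]

theorem hasSum_of_tendsto_of_nonneg {c : ℕ → ℝ} (hc : ∀ n, 0 ≤ c n) {G : α → ℝ} {R L : ℝ}
    (hφ : Tendsto φ l (𝓝 R)) (hφR : ∀ᶠ x in l, φ x ∈ Icc 0 R) (hG : Tendsto G l (𝓝 L))
    (h : ∀ᶠ x in l, HasSum (fun n => c n * φ x ^ n) (G x)) : HasSum (fun n => c n * R ^ n) L := by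
  have hR : 0 ≤ R := ge_of_tendsto hφ (hφR.mono fun x hx => hx.1)
  have hterm (n : ℕ) : 0 ≤ c n * R ^ n := mul_nonneg (hc n) (pow_nonneg hR n)
  have hle (s : Finset ℕ) : ∑ n ∈ s, c n * R ^ n ≤ L := by
    refine le_of_tendsto_of_tendsto
      (tendsto_finsetSum s fun n _ => (hφ.pow n).const_mul (c n)) hG ?_
    filter_upwards [h, hφR] with x hx hxR
    exact sum_le_hasSum s (fun n _ => mul_nonneg (hc n) (pow_nonneg hxR.1 n)) hx
  have hsum : Summable fun n => c n * R ^ n := summable_of_sum_le hterm hle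
  have hge : L ≤ ∑' n, c n * R ^ n := by
    refine le_of_tendsto hG ?_
    filter_upwards [h, hφR] with x hx hxR
    exact hasSum_le (fun n => mul_le_mul_of_nonneg_left (pow_le_pow_left₀ hxR.1 hxR.2 n) (hc n))
      hx hsum.hasSum
  rw [hge.antisymm (hsum.tsum_le_of_sum_le hle)]
  exact hsum.hasSum

end Coefficients

end PowerSeries

section DoubleSeries

variable {𝕜 : Type*} [NormedField 𝕜] {z : ℕ → ℕ → 𝕜} {u v S : 𝕜}

theorem hasSum_prod_transpose
    (h : HasSum (fun pq : ℕ × ℕ => z pq.1 pq.2 * u ^ pq.1 * v ^ pq.2) S) :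
    HasSum (fun qp : ℕ × ℕ => z qp.2 qp.1 * v ^ qp.1 * u ^ qp.2) S := by
  refine ((Equiv.prodComm ℕ ℕ).hasSum_iff.2 h).congr_fun fun qp => ?_
  exact mul_right_comm _ _ _

theorem hasSum_rows [CompleteSpace 𝕜]
    (h : HasSum (fun pq : ℕ × ℕ => z pq.1 pq.2 * u ^ pq.1 * v ^ pq.2) S) :
    HasSum (fun p => (∑' q, z p q * v ^ q) * u ^ p) S := by
  refine h.prod_fiberwise fun p => ?_
  rw [← tsum_mul_right]
  exact (h.summable.prod_factor p).hasSum_iff.2 (tsum_congr fun q => mul_right_comm _ _ _)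

theorem summable_row [CompleteSpace 𝕜] (hu : u ≠ 0)
    (h : Summable fun pq : ℕ × ℕ => z pq.1 pq.2 * u ^ pq.1 * v ^ pq.2) (p : ℕ) :
    Summable fun q => z p q * v ^ q :=
  (summable_mul_right_iff (pow_ne_zero p hu)).1
    ((h.prod_factor p).congr fun _ => mul_right_comm _ _ _)

theorem hasSum_prod_of_hasSum_rows {z : ℕ → ℕ → ℝ} {u v S : ℝ} (hz : ∀ p q, 0 ≤ z p q)
    (hu : 0 ≤ u) (hv : 0 ≤ v) (hrow : ∀ p, Summable fun q => z p q * v ^ q)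
    (h : HasSum (fun p => (∑' q, z p q * v ^ q) * u ^ p) S) :
    HasSum (fun pq : ℕ × ℕ => z pq.1 pq.2 * u ^ pq.1 * v ^ pq.2) S := by
  have hsum : Summable fun pq : ℕ × ℕ => z pq.1 pq.2 * u ^ pq.1 * v ^ pq.2 := by
    refine (summable_prod_of_nonneg fun pq => ?_).2 ⟨fun p => ?_, ?_⟩
    · exact mul_nonneg (mul_nonneg (hz _ _) (pow_nonneg hu _)) (pow_nonneg hv _)
    · exact ((hrow p).mul_right (u ^ p)).congr fun q => mul_right_comm _ _ _
    · refine h.summable.congr fun p => ?_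
      rw [← tsum_mul_right]
      exact tsum_congr fun q => mul_right_comm _ _ _
  exact (hasSum_rows hsum.hasSum).unique h ▸ hsum.hasSum

end DoubleSeries

section AbsolutelyMonotone

open Filter Topology Set

variable {f : ℝ → ℝ}

theorem nonneg_of_hasFPowerSeriesOnBall {p : FormalMultilinearSeries ℝ ℝ ℝ} {x y : ℝ}
    {r : ENNReal} (hf : HasFPowerSeriesOnBall f p x r) (hp : ∀ n, 0 ≤ p.coeff n) (hxy : x ≤ y)
    (hy : y ∈ Metric.eball x r) : 0 ≤ f y :=
  (hf.hasSum_sub hy).nonneg fun n => by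
    rw [FormalMultilinearSeries.apply_eq_pow_smul_coeff]
    exact smul_nonneg (pow_nonneg (sub_nonneg.2 hxy) n) (hp n)

theorem exists_hasFPowerSeriesOnBall_deriv {𝕜 : Type*} [NontriviallyNormedField 𝕜]
    [CompleteSpace 𝕜] {f : 𝕜 → 𝕜} {p : FormalMultilinearSeries 𝕜 𝕜 𝕜} {x : 𝕜} {r : ENNReal}
    (hf : HasFPowerSeriesOnBall f p x r) :
    ∃ q : FormalMultilinearSeries 𝕜 𝕜 𝕜, HasFPowerSeriesOnBall (deriv f) q x r ∧
      ∀ n, q.coeff n = (n + 1) • p.coeff (n + 1) := by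
  refine ⟨(ContinuousLinearMap.apply 𝕜 𝕜 (1 : 𝕜)).compFormalMultilinearSeries p.derivSeries,
    ((ContinuousLinearMap.apply 𝕜 𝕜 (1 : 𝕜)).comp_hasFPowerSeriesOnBall hf.fderiv).congr
      fun y _ => fderiv_apply_one_eq_deriv, fun n => ?_⟩
  exact p.derivSeries_coeff_one n

theorem iteratedDeriv_nonneg_of_hasFPowerSeriesOnBall {p : FormalMultilinearSeries ℝ ℝ ℝ}
    {x y : ℝ} {r : ENNReal} (hf : HasFPowerSeriesOnBall f p x r) (hp : ∀ n, 0 ≤ p.coeff n)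
    (hxy : x ≤ y) (hy : y ∈ Metric.eball x r) (n : ℕ) : 0 ≤ iteratedDeriv n f y := by
  induction n generalizing f p with
  | zero => simpa using nonneg_of_hasFPowerSeriesOnBall hf hp hxy hy
  | succ n ih =>
    obtain ⟨q, hq, hqp⟩ := exists_hasFPowerSeriesOnBall_deriv hf
    rw [iteratedDeriv_succ']
    exact ih hq fun k => by simpa only [hqp] using nsmul_nonneg (hp (k + 1)) (k + 1)

theorem eventually_iteratedDeriv_nonneg {x : ℝ} (hf : AnalyticAt ℝ f x)
    (hx : ∀ n, 0 ≤ iteratedDeriv n f x) :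
    ∀ᶠ y in 𝓝[≥] x, ∀ n, 0 ≤ iteratedDeriv n f y := by
  obtain ⟨r, hr⟩ := hf.hasFPowerSeriesAt
  filter_upwards [nhdsWithin_le_nhds (Metric.eball_mem_nhds x hr.r_pos), self_mem_nhdsWithin]
    with y hy hxy n
  refine iteratedDeriv_nonneg_of_hasFPowerSeriesOnBall hr (fun k => ?_) hxy hy n
  rw [FormalMultilinearSeries.coeff_ofScalars]
  exact div_nonneg (hx k) (Nat.cast_nonneg _)

theorem continuousOn_iteratedDeriv_of_analyticOnNhd {s : Set ℝ} (hf : AnalyticOnNhd ℝ f s)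
    (n : ℕ) : ContinuousOn (iteratedDeriv n f) s := by
  rw [iteratedDeriv_eq_iterate]
  exact (hf.iterated_deriv n).continuousOn

theorem iteratedDeriv_nonneg_of_analyticOnNhd {a b : ℝ} (hf : AnalyticOnNhd ℝ f (Icc a b))
    (ha : ∀ n, 0 ≤ iteratedDeriv n f a) {x : ℝ} (hx : x ∈ Icc a b) (n : ℕ) :
    0 ≤ iteratedDeriv n f x := by
  have hclosed : IsClosed ({y | ∀ n, 0 ≤ iteratedDeriv n f y} ∩ Icc a b) := by
    rw [Set.ofPred_forall, iInter_inter]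
    refine isClosed_iInter fun k => ?_
    rw [inter_comm]
    exact (continuousOn_iteratedDeriv_of_analyticOnNhd hf k).preimage_isClosed_of_isClosed
      isClosed_Icc isClosed_Ici
  refine hclosed.Icc_subset_of_forall_mem_nhdsWithin ha (fun y hy => ?_) hx n
  exact nhdsWithin_mono y Ioi_subset_Ici_self
    (eventually_iteratedDeriv_nonneg (hf y (Ico_subset_Icc_self hy.2)) hy.1)

theorem sum_taylor_le_of_iteratedDeriv_nonneg {x : ℝ} (hf : AnalyticOnNhd ℝ f (Icc 0 x))
    (h0 : ∀ n, 0 ≤ iteratedDeriv n f 0) (hx : 0 < x) (n : ℕ) :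
    ∑ k ∈ Finset.range (n + 1), iteratedDeriv k f 0 / k.factorial * x ^ k ≤ f x := by
  rw [← uIcc_of_le hx.le] at hf
  obtain ⟨y, hy, hremainder⟩ := taylor_mean_remainder_lagrange_iteratedDeriv (n := n) hx.ne
    (hf.contDiffOn (uniqueDiffOn_uIcc hx.ne))
  rw [uIoo_of_le hx.le] at hy
  have htaylor : taylorWithinEval f n (uIcc 0 x) 0 x
      = ∑ k ∈ Finset.range (n + 1), iteratedDeriv k f 0 / k.factorial * x ^ k := by
    rw [taylor_within_apply]
    refine Finset.sum_congr rfl fun k _ => ?_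
    rw [iteratedDerivWithin_eq_iteratedDeriv (uniqueDiffOn_uIcc hx.ne)
      (hf 0 left_mem_uIcc).contDiffAt left_mem_uIcc, sub_zero, smul_eq_mul]
    ring
  rw [uIcc_of_le hx.le] at hf
  have hderiv := iteratedDeriv_nonneg_of_analyticOnNhd hf h0 (Ioo_subset_Icc_self hy) (n + 1)
  rw [← htaylor, ← sub_nonneg, hremainder, sub_zero]
  positivity

theorem summable_taylor_of_iteratedDeriv_nonneg {x : ℝ} (hf : AnalyticOnNhd ℝ f (Icc 0 x))
    (h0 : ∀ n, 0 ≤ iteratedDeriv n f 0) (hx : 0 < x) :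
    Summable fun n => iteratedDeriv n f 0 / n.factorial * x ^ n := by
  have hterm (n : ℕ) : 0 ≤ iteratedDeriv n f 0 / n.factorial * x ^ n := by
    have := h0 n
    positivity
  refine summable_of_sum_range_le (c := f x) hterm fun n => ?_
  exact (Finset.sum_le_sum_of_subset_of_nonneg (Finset.range_mono n.le_succ)
    fun k _ _ => hterm k).trans (sum_taylor_le_of_iteratedDeriv_nonneg hf h0 hx n)

theorem iteratedDeriv_div_factorial_eq_of_hasFPowerSeriesAt {c : ℕ → ℝ}
    (hf : HasFPowerSeriesAt f (FormalMultilinearSeries.ofScalars ℝ c) 0) (n : ℕ) :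
    iteratedDeriv n f 0 / n.factorial = c n :=
  congrFun (FormalMultilinearSeries.ofScalars_series_injective ℝ ℝ
    (hf.analyticAt.hasFPowerSeriesAt.eq_formalMultilinearSeries hf)) n

theorem summable_of_hasFPowerSeriesAt_of_nonneg {c : ℕ → ℝ} (hc : ∀ n, 0 ≤ c n)
    (hf : HasFPowerSeriesAt f (FormalMultilinearSeries.ofScalars ℝ c) 0) {x : ℝ} (hx : 0 < x)
    (hanalytic : AnalyticOnNhd ℝ f (Icc 0 x)) : Summable fun n => c n * x ^ n := by
  have hcoeff := iteratedDeriv_div_factorial_eq_of_hasFPowerSeriesAt hf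
  have hderiv (n : ℕ) : 0 ≤ iteratedDeriv n f 0 := by
    rw [(div_eq_iff (Nat.cast_ne_zero.2 n.factorial_ne_zero)).1 (hcoeff n)]
    exact mul_nonneg (hc n) (Nat.cast_nonneg _)
  have hsum := summable_taylor_of_iteratedDeriv_nonneg hanalytic hderiv hx
  simpa only [hcoeff] using hsum

theorem analyticOnNhd_tsum_Ico {c : ℕ → ℝ} {R : ℝ}
    (hsum : ∀ x ∈ Ioo 0 R, Summable fun n => c n * x ^ n) :
    AnalyticOnNhd ℝ (fun x => ∑' n, c n * x ^ n) (Ico 0 R) := by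
  intro x hx
  obtain ⟨r, hxr, hrR⟩ := exists_between hx.2
  have hr := hx.1.trans_lt hxr
  have hnorm := summable_norm_mul_abs_pow (hsum r ⟨hr, hrR⟩)
  rw [abs_of_pos hr] at hnorm
  refine analyticOnNhd_tsum hr hnorm x ?_
  rwa [mem_ball_zero_iff, Real.norm_of_nonneg hx.1]

theorem hasSum_of_hasFPowerSeriesAt_of_nonneg {c : ℕ → ℝ} (hc : ∀ n, 0 ≤ c n)
    (hf : HasFPowerSeriesAt f (FormalMultilinearSeries.ofScalars ℝ c) 0) {R : ℝ}
    (hanalytic : AnalyticOnNhd ℝ f (Ico 0 R)) {x : ℝ} (hx : x ∈ Ico 0 R) :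
    HasSum (fun n => c n * x ^ n) (f x) := by
  have hsum : ∀ y ∈ Ioo 0 R, Summable fun n => c n * y ^ n := fun y hy =>
    summable_of_hasFPowerSeriesAt_of_nonneg hc hf hy.1
      (hanalytic.mono (Icc_subset_Ico_right hy.2))
  have hnear : f =ᶠ[𝓝 0] fun y => ∑' n, c n * y ^ n := by
    filter_upwards [hf.eventually_hasSum] with y hy
    rw [← zero_add y, ← hy.tsum_eq]
    simp [mul_comm]
  have heq := hanalytic.eqOn_of_preconnected_of_eventuallyEq (analyticOnNhd_tsum_Ico hsum)
    isPreconnected_Ico ⟨le_rfl, hx.1.trans_lt hx.2⟩ hnear hx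
  rw [heq]
  rcases hx.1.eq_or_lt with rfl | hpos
  · refine (summable_of_ne_finset_zero (s := {0}) fun n hn => ?_).hasSum
    rw [zero_pow (Finset.notMem_singleton.1 hn), mul_zero]
  · exact (hsum x ⟨hpos, hx.2⟩).hasSum

theorem exists_analyticOnNhd_image_comp_eq {𝕜 : Type*} [RCLike 𝕜] {φ G : 𝕜 → 𝕜} {s : Set 𝕜}
    (hs : IsOpen s) (hφ : AnalyticOnNhd 𝕜 φ s) (hφ' : ∀ x ∈ s, deriv φ x ≠ 0) (hinj : InjOn φ s)
    (hG : AnalyticOnNhd 𝕜 G s) : ∃ g, AnalyticOnNhd 𝕜 g (φ '' s) ∧ ∀ x ∈ s, g (φ x) = G x := by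
  have hinv : ∀ x ∈ s, G (Function.invFunOn φ s (φ x)) = G x := fun x hx => by
    rw [hinj.leftInvOn_invFunOn hx]
  refine ⟨G ∘ Function.invFunOn φ s, ?_, hinv⟩
  rintro _ ⟨x, hx, rfl⟩
  rw [← analyticAt_comp_iff_of_deriv_ne_zero (hφ x hx) (hφ' x hx)]
  refine (hG x hx).congr ?_
  filter_upwards [hs.mem_nhds hx] with y hy
  exact (hinv y hy).symm

theorem hasSum_comp_of_nonneg {c : ℕ → ℝ} (hc : ∀ n, 0 ≤ c n) {φ G : ℝ → ℝ} {b : ℝ} (hb : 0 < b)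
    (hφ : AnalyticOnNhd ℝ φ (Iic b)) (hφ' : ∀ x < b, 0 < deriv φ x) (hφ0 : φ 0 = 0)
    (hG : AnalyticOnNhd ℝ G (Iic b))
    (h : ∀ᶠ x in 𝓝[>] 0, HasSum (fun n => c n * φ x ^ n) (G x)) :
    ∀ x ∈ Icc 0 b, HasSum (fun n => c n * φ x ^ n) (G x) := by
  have hmono : StrictMonoOn φ (Iic b) :=
    strictMonoOn_of_deriv_pos (convex_Iic b) hφ.continuousOn fun x hx => hφ' x (by simpa using hx)
  obtain ⟨g, hg, hgφ⟩ := exists_analyticOnNhd_image_comp_eq isOpen_Iio (hφ.mono Iio_subset_Iic_self)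
    (fun x hx => (hφ' x hx).ne') (hmono.mono Iio_subset_Iic_self).injOn
    (hG.mono Iio_subset_Iic_self)
  have hzero : (0 : ℝ) ∈ Iio b := hb
  have hnear : Tendsto φ (𝓝[>] 0) (𝓝[≠] 0) := by
    have hderiv := (hφ 0 hb.le).differentiableAt.hasDerivAt.tendsto_nhdsNE (hφ' 0 hb).ne'
    rw [hφ0] at hderiv
    exact hderiv.mono_left (nhdsWithin_mono _ fun x hx => ne_of_gt hx)
  have hrange : Ico 0 (φ b) ⊆ φ '' Iio b := by
    rw [← hφ0]
    refine (intermediate_value_Ico hb.le (hφ.continuousOn.mono Icc_subset_Iic_self)).trans ?_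
    exact image_mono Ico_subset_Iio_self
  have hseries := hasFPowerSeriesAt_of_eventually_hasSum (hg 0 ⟨0, hzero, hφ0⟩) hnear (by
    filter_upwards [h, nhdsWithin_le_nhds (Iio_mem_nhds hb)] with x hx hxb
    rwa [hgφ x hxb])
  have hmem : ∀ x ∈ Ico 0 b, φ x ∈ Ico 0 (φ b) := fun x hx =>
    ⟨hφ0 ▸ hmono.monotoneOn hb.le hx.2.le hx.1, hmono hx.2.le self_mem_Iic hx.2⟩
  have hopen : ∀ x ∈ Ico 0 b, HasSum (fun n => c n * φ x ^ n) (G x) := fun x hx =>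
    hgφ x hx.2 ▸ hasSum_of_hasFPowerSeriesAt_of_nonneg hc hseries (hg.mono hrange) (hmem x hx)
  intro x hx
  rcases hx.2.eq_or_lt with rfl | hxb
  · have hleft : ∀ᶠ y in 𝓝[<] x, y ∈ Ico 0 x := Ico_mem_nhdsLT hb
    refine hasSum_of_tendsto_of_nonneg (l := 𝓝[<] x) hc
      ((hφ x self_mem_Iic).continuousAt.tendsto.mono_left nhdsWithin_le_nhds)
      (hleft.mono fun y hy => Ico_subset_Icc_self (hmem y hy))
      ((hG x self_mem_Iic).continuousAt.tendsto.mono_left nhdsWithin_le_nhds)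
      (hleft.mono hopen)
  · exact hopen x ⟨hx.1, hxb⟩

end AbsolutelyMonotone

section Constants

theorem sqrt_seven_sq : Real.sqrt 7 ^ 2 = 7 := Real.sq_sqrt (by norm_num)

theorem tc_pos : 0 < tc := by
  unfold tc
  positivity

theorem uc_pos : 0 < uc := by
  have := tc_pos
  unfold uc
  positivity

theorem nuc_sq_sub_one : nuc ^ 2 - 1 = 4 * (7 + Real.sqrt 7) := by
  unfold nuc
  linear_combination 4 * sqrt_seven_sq

theorem nuc_sq_sub_one_mul_tc : (nuc ^ 2 - 1) * tc = 10 / 3 * uc := by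
  rw [nuc_sq_sub_one, uc]
  ring

theorem tc_sq : tc ^ 2 * (64 * (7 + Real.sqrt 7) ^ 3) = 10 := by
  have hpow : ((7 + Real.sqrt 7) ^ ((3 : ℝ) / 2)) ^ 2 = (7 + Real.sqrt 7) ^ 3 := by
    rw [← Real.rpow_natCast, ← Real.rpow_mul (by positivity), ← Real.rpow_natCast]
    norm_num
  have : (7 + Real.sqrt 7) ^ 3 ≠ 0 := by positivity
  rw [tc, div_pow, mul_pow, hpow, Real.sq_sqrt (by norm_num)]
  field_simp
  norm_num

theorem nuc_sq_sub_one_mul_uc_sq : (nuc ^ 2 - 1) * uc ^ 2 = 9 / 10 := by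
  rw [nuc_sq_sub_one, uc]
  linear_combination (9 / 100) * tc_sq

theorem tc_eq_mul_uc : tc = 5 / 252 * (7 - Real.sqrt 7) * uc := by
  rw [uc]
  linear_combination (1 / 42) * tc * sqrt_seven_sq

end Constants

section RealParametrization

open Filter Topology Set

/-- The restriction of `û` to the real axis. -/
noncomputable def uReal (H : ℝ) : ℝ := uc / 3 * H * (10 - 12 * H + 6 * H ^ 2 - H ^ 3)

/-- The restriction of `Ẑ₀` to the real axis. -/
noncomputable def Z0Real (H : ℝ) : ℝ :=
  (1 / 10) * (1 - (1 - Real.sqrt 7) * H + 3 * H ^ 2 - H ^ 3) * (10 - 12 * H + 6 * H ^ 2 - H ^ 3)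

/-- The restriction of `Ẑ₁` to the real axis. -/
noncomputable def Z1Real (H : ℝ) : ℝ :=
  (3 / (10 * uc)) *
    (Real.sqrt 7 - 1 + H - 3 * (4 - 3 * H + H ^ 2) / (10 - 12 * H + 6 * H ^ 2 - H ^ 3))

/-- The restriction of `Â` to the real axis. -/
noncomputable def AReal (H : ℝ) : ℝ :=
  (1 / 10) * ((3 : ℝ) / 2) ^ ((7 : ℝ) / 3) * (9 - 8 * H + 3 * H ^ 2) / (3 - 3 * H + H ^ 2) ^ 2

/-- The value `A(0)`, which is also `Â(0)`. -/
noncomputable def AZero : ℝ := (1 / 10) * ((3 : ℝ) / 2) ^ ((7 : ℝ) / 3)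

/-- The denominator of the rational parametrization `ZReal` of `Z(u, v)`. -/
def bivariateDenom (H K : ℝ) : ℝ :=
  10 - 12 * K + 6 * K ^ 2 - K ^ 3 - H * (12 - 9 * K + 3 * K ^ 2) + H ^ 2 * (6 - 3 * K + K ^ 2)
    - H ^ 3

/-- The nontrivial factor of the numerator of the rational parametrization `ZReal` of `Z(u, v)`. -/
def bivariateNum (H K : ℝ) : ℝ :=
  -22 + 31 * K - 21 * K ^ 2 + 7 * K ^ 3 - K ^ 4 + H * (48 - 48 * K + 22 * K ^ 2 - 3 * K ^ 3)
    + H ^ 2 * (-53 + 42 * K - 16 * K ^ 2 + K ^ 3) + H ^ 3 * (31 - 18 * K + 6 * K ^ 2)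
    + H ^ 4 * (-9 + 3 * K - K ^ 2) + H ^ 5

/-- The rational parametrization of `Z(u, v)`, with `u = û(H)` and `v = û(K)`. -/
noncomputable def ZReal (H K : ℝ) : ℝ :=
  Z0Real K + uReal H * (3 / (10 * uc) * (Real.sqrt 7 + bivariateNum H K / bivariateDenom H K))

/-- The rational parametrization of `Z(u, u_c)`, with `u = û(H)`. Both `bivariateNum H 1` and
`bivariateDenom H 1` have a factor `1 - H`, which is cancelled here. -/
noncomputable def ZcReal (H : ℝ) : ℝ :=
  Z0Real 1 + uReal H * (3 / (10 * uc) *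
    (Real.sqrt 7 + (-6 + 13 * H - 13 * H ^ 2 + 6 * H ^ 3 - H ^ 4) / (3 - 3 * H + H ^ 2)))

/-- The equation satisfied by the value `S = Z(u, v)` at `u = û(H)`, `v = û(K)`. -/
def KernelEquation (H K S : ℝ) : Prop :=
  (nuc * uReal K * uReal H - uReal H ^ 2
      - (nuc ^ 2 - 1) * tc * uReal K * (Z0Real H + uReal H * Z1Real K)) * (S - Z0Real K)
    = uReal H ^ 2 * (Z0Real K - Z0Real H)
      + (nuc ^ 2 - 1) * uReal H * uReal K * (uReal H ^ 2 - tc * Z0Real H * Z1Real K)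

theorem uhat_ofReal (H : ℝ) : uhat H = uReal H := by
  simp [uhat, uReal]

theorem Z0hat_ofReal (H : ℝ) : Z0hat H = Z0Real H := by
  simp [Z0hat, Z0Real]

theorem Z1hat_ofReal (H : ℝ) : Z1hat H = Z1Real H := by
  simp [Z1hat, Z1Real]

theorem Ahat_ofReal (H : ℝ) : Ahat H = AReal H := by
  simp [Ahat, AReal]

theorem cubic_pos {H : ℝ} (hH : H ≤ 1) : 0 < 10 - 12 * H + 6 * H ^ 2 - H ^ 3 := by
  have hcube : 0 < (2 - H) ^ 3 := pow_pos (by linarith) 3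
  linarith [show 10 - 12 * H + 6 * H ^ 2 - H ^ 3 = (2 - H) ^ 3 + 2 by ring]

theorem quadratic_pos (H : ℝ) : 0 < 3 - 3 * H + H ^ 2 := by
  nlinarith [sq_nonneg (H - 3 / 2)]

theorem bivariateDenom_pos {H K : ℝ} (hH : H < 1) (hK : K ≤ 1) : 0 < bivariateDenom H K := by
  obtain ⟨x, hx, rfl⟩ : ∃ x, 0 < x ∧ H = 1 - x := ⟨1 - H, by linarith, by ring⟩
  obtain ⟨y, hy, rfl⟩ : ∃ y, 0 ≤ y ∧ K = 1 - y := ⟨1 - K, by linarith, by ring⟩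
  have hexpand : bivariateDenom (1 - x) (1 - y) = x + y + x ^ 2 + x * y + y ^ 2 + x ^ 3
      + x ^ 2 * y + x * y ^ 2 + y ^ 3 + x ^ 2 * y ^ 2 := by
    unfold bivariateDenom
    ring
  rw [hexpand]
  positivity

theorem uReal_zero : uReal 0 = 0 := by simp [uReal]

theorem uReal_one : uReal 1 = uc := by
  unfold uReal
  ring

theorem uReal_pos {H : ℝ} (h0 : 0 < H) (h1 : H ≤ 1) : 0 < uReal H := by
  have := cubic_pos h1
  have := uc_pos
  unfold uReal
  positivity

theorem analyticOnNhd_uReal (s : Set ℝ) : AnalyticOnNhd ℝ uReal s := fun x _ => by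
  unfold uReal
  fun_prop

theorem hasDerivAt_uReal (H : ℝ) :
    HasDerivAt uReal (2 * uc / 3 * (1 - H) ^ 2 * (5 - 2 * H)) H := by
  have hid := hasDerivAt_id' H
  have hprod : HasDerivAt uReal _ H := (hid.const_mul (uc / 3)).mul
    ((((hid.const_mul 12).const_sub 10).add ((hid.pow 2).const_mul 6)).sub (hid.pow 3))
  refine hprod.congr_deriv ?_
  norm_num
  ring

theorem deriv_uReal_pos {H : ℝ} (hH : H < 1) : 0 < deriv uReal H := by
  rw [(hasDerivAt_uReal H).deriv]
  have hconst : 0 < 2 * uc / 3 := by linarith [uc_pos]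
  exact mul_pos (mul_pos hconst (pow_pos (sub_pos.2 hH) 2)) (by linarith)

theorem tendsto_uReal_nhdsNE : Tendsto uReal (𝓝[>] 0) (𝓝[≠] 0) := by
  have hslope := (hasDerivAt_uReal 0).tendsto_nhdsNE (by norm_num [uc_pos.ne'])
  rw [uReal_zero] at hslope
  exact hslope.mono_left (nhdsGT_le_nhdsNE 0)

theorem analyticOnNhd_Z0Real (s : Set ℝ) : AnalyticOnNhd ℝ Z0Real s := fun x _ => by
  unfold Z0Real
  fun_prop

theorem analyticOnNhd_Z1Real : AnalyticOnNhd ℝ Z1Real (Iic 1) := fun x hx => by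
  have := (cubic_pos hx).ne'
  unfold Z1Real
  fun_prop (disch := assumption)

theorem analyticOnNhd_AReal (s : Set ℝ) : AnalyticOnNhd ℝ AReal s := fun x _ => by
  have := pow_ne_zero 2 (quadratic_pos x).ne'
  unfold AReal
  fun_prop (disch := assumption)

theorem analyticOnNhd_ZReal_right {H : ℝ} (hH : H < 1) : AnalyticOnNhd ℝ (ZReal H) (Iic 1) :=
  fun K hK => by
  have := (bivariateDenom_pos hH hK).ne'
  unfold bivariateDenom at this
  unfold ZReal Z0Real bivariateNum bivariateDenom
  fun_prop (disch := assumption)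

theorem analyticOnNhd_ZcReal (s : Set ℝ) : AnalyticOnNhd ℝ ZcReal s := fun x _ => by
  have := (quadratic_pos x).ne'
  unfold ZcReal uReal
  fun_prop (disch := assumption)

theorem ZReal_one {H : ℝ} (hH : H ≠ 1) : ZReal H 1 = ZcReal H := by
  have hdenom : bivariateDenom H 1 = (1 - H) * (3 - 3 * H + H ^ 2) := by
    unfold bivariateDenom
    ring
  have hnum : bivariateNum H 1 = (1 - H) * (-6 + 13 * H - 13 * H ^ 2 + 6 * H ^ 3 - H ^ 4) := by
    unfold bivariateNum
    ring
  rw [ZReal, ZcReal, hdenom, hnum, mul_div_mul_left _ _ (sub_ne_zero.2 hH.symm)]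

theorem tendsto_ZReal_slope {K : ℝ} (hK : K ≤ 1) :
    Tendsto (fun H => 3 / (10 * uc) * (Real.sqrt 7 + bivariateNum H K / bivariateDenom H K))
      (𝓝 0) (𝓝 (Z1Real K)) := by
  have hdenom : bivariateDenom 0 K ≠ 0 := (bivariateDenom_pos one_pos hK).ne'
  have hvalue : 3 / (10 * uc) * (Real.sqrt 7 + bivariateNum 0 K / bivariateDenom 0 K)
      = Z1Real K := by
    have hcubic : bivariateDenom 0 K = 10 - 12 * K + 6 * K ^ 2 - K ^ 3 := by
      unfold bivariateDenom
      ring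
    have hnum : bivariateNum 0 K
        = (K - 1) * (10 - 12 * K + 6 * K ^ 2 - K ^ 3) - 3 * (4 - 3 * K + K ^ 2) := by
      unfold bivariateNum
      ring
    rw [hcubic] at hdenom ⊢
    rw [hnum, sub_div, mul_div_cancel_right₀ _ hdenom, Z1Real]
    ring
  rw [← hvalue]
  refine ((ContinuousAt.div (f := fun H => bivariateNum H K) (g := fun H => bivariateDenom H K)
    ?_ ?_ hdenom).tendsto.const_add _).const_mul _
  · unfold bivariateNum
    fun_prop
  · unfold bivariateDenom
    fun_prop

theorem uReal_mul_Z1Real {K : ℝ} (hK : K ≤ 1) :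
    uReal K * Z1Real K = K / 10 * ((Real.sqrt 7 - 1 + K) * (10 - 12 * K + 6 * K ^ 2 - K ^ 3)
      - 3 * (4 - 3 * K + K ^ 2)) := by
  have hcubic := (cubic_pos hK).ne'
  have huc := uc_pos.ne'
  unfold uReal Z1Real
  generalize 10 - 12 * K + 6 * K ^ 2 - K ^ 3 = P at hcubic ⊢
  field_simp

theorem kernel_eq_mul_bivariateDenom {H K : ℝ} (hK : K ≤ 1) :
    nuc * uReal K * uReal H - uReal H ^ 2
        - (nuc ^ 2 - 1) * tc * uReal K * (Z0Real H + uReal H * Z1Real K)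
      = -(uc ^ 2 / 9) * (10 - 12 * H + 6 * H ^ 2 - H ^ 3) * (H ^ 2 + (K ^ 2 - 3 * K) * H + K)
        * bivariateDenom H K := by
  have hregroup : (nuc ^ 2 - 1) * tc * uReal K * (Z0Real H + uReal H * Z1Real K)
      = ((nuc ^ 2 - 1) * tc) * (uReal K * Z0Real H + uReal H * (uReal K * Z1Real K)) := by ring
  rw [hregroup, nuc_sq_sub_one_mul_tc, uReal_mul_Z1Real hK]
  unfold uReal Z0Real bivariateDenom nuc
  ring

theorem kernelRHS_eq_mul_bivariateNum {H K : ℝ} (hK : K ≤ 1) :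
    uReal H ^ 2 * (Z0Real K - Z0Real H)
        + (nuc ^ 2 - 1) * uReal H * uReal K * (uReal H ^ 2 - tc * Z0Real H * Z1Real K)
      = -(uc ^ 2 / 9) * (10 - 12 * H + 6 * H ^ 2 - H ^ 3) * (H ^ 2 + (K ^ 2 - 3 * K) * H + K)
        * (H * (10 - 12 * H + 6 * H ^ 2 - H ^ 3) / 10 *
          (Real.sqrt 7 * bivariateDenom H K + bivariateNum H K)) := by
  have hregroup : (nuc ^ 2 - 1) * uReal H * uReal K * (uReal H ^ 2 - tc * Z0Real H * Z1Real K)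
      = (nuc ^ 2 - 1) * uReal H * uReal K * uReal H ^ 2
        - ((nuc ^ 2 - 1) * tc) * uReal H * Z0Real H * (uReal K * Z1Real K) := by ring
  rw [hregroup, nuc_sq_sub_one_mul_tc, uReal_mul_Z1Real hK]
  unfold uReal Z0Real bivariateDenom bivariateNum
  linear_combination
    (uc ^ 2 / 81 * H ^ 3 * K * (10 - 12 * H + 6 * H ^ 2 - H ^ 3) ^ 3
      * (10 - 12 * K + 6 * K ^ 2 - K ^ 3)) * nuc_sq_sub_one_mul_uc_sq
    - (uc ^ 2 / 90 * H ^ 2 * K * (10 - 12 * H + 6 * H ^ 2 - H ^ 3) ^ 2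
      * (10 - 12 * K + 6 * K ^ 2 - K ^ 3)) * sqrt_seven_sq

theorem eq_ZReal_of_kernelEquation {H K S : ℝ} (hH0 : 0 < H) (hH : H < 1 / 3) (hK0 : 0 < K)
    (hK : K ≤ 1) (h : KernelEquation H K S) : S = ZReal H K := by
  rw [KernelEquation, kernel_eq_mul_bivariateDenom hK, kernelRHS_eq_mul_bivariateNum hK,
    mul_assoc _ (bivariateDenom H K)] at h
  have huc := uc_pos.ne'
  have hconst : -(uc ^ 2 / 9) ≠ 0 := by simp [huc]
  have hcubic := (cubic_pos (H := H) (by linarith)).ne'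
  have hfactor : H ^ 2 + (K ^ 2 - 3 * K) * H + K ≠ 0 := by
    nlinarith [mul_pos hK0 hH0, sq_nonneg K]
  have hdenom := (bivariateDenom_pos (H := H) (by linarith) hK).ne'
  have hS := mul_left_cancel₀ (mul_ne_zero (mul_ne_zero hconst hcubic) hfactor) h
  have hu : uReal H * (3 / (10 * uc)) = H * (10 - 12 * H + 6 * H ^ 2 - H ^ 3) / 10 := by
    unfold uReal
    field_simp
  rw [ZReal, ← mul_assoc, hu]
  field_simp
  linear_combination 10 * hS

theorem AReal_eq_add_uReal_mul (H : ℝ) :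
    AReal H = AZero + uReal H * (3 * AZero / (uc * (3 - 3 * H + H ^ 2) ^ 2)) := by
  have huc := uc_pos.ne'
  have hquadratic := (quadratic_pos H).ne'
  unfold AReal AZero uReal
  generalize hQ : 3 - 3 * H + H ^ 2 = Q at hquadratic ⊢
  field_simp
  subst hQ
  ring

/-- `u²` times the right-hand side of the functional equation of `A`, as a polynomial in `u`, the
values `A = A(u)`, `Z₀ = Z₀(u)`, `Z₁ = Z₁(u)`, `Zc = Z(u, u_c)` and the coefficients `a₀`, `a₁`. -/
noncomputable def clearedRHS (a₀ a₁ u A Z₀ Z₁ Zc : ℂ) : ℂ :=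
  tc * uc * ((A - a₀ - a₁ * u) + (Z1Real 1 * u + (Z₀ - 1)) * (A - a₀)
      + a₁ * (u * (Zc - Z0Real 1 - (Z₀ - 1))))
    + nuc * tc * (u ^ 2 * (A / uc + ((Z0Real 1 - 1) / uc + Z₁) * A + a₀ * ((Zc - Z₀) / uc - Z₁)))

theorem AReal_mul_uReal_sq {H : ℝ} (hH : H ≤ 1) :
    (AReal H : ℂ) * (uReal H : ℂ) ^ 2
      = clearedRHS AZero (AZero / (3 * uc) : ℝ) (uReal H) (AReal H) (Z0Real H) (Z1Real H)
        (ZcReal H) := by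
  unfold clearedRHS
  norm_cast
  have hcubic := (cubic_pos hH).ne'
  have hquadratic := (quadratic_pos H).ne'
  have huc := uc_pos.ne'
  unfold ZcReal AReal
  rw [← AZero, tc_eq_mul_uc]
  unfold uReal Z0Real Z1Real nuc
  have hsqrt := sqrt_seven_sq
  generalize Real.sqrt 7 = s at hsqrt ⊢
  norm_num only
  generalize hP : 10 - 12 * H + 6 * H ^ 2 - H ^ 3 = P at hcubic ⊢
  generalize hQ : 3 - 3 * H + H ^ 2 = Q at hquadratic ⊢
  field_simp
  subst hP hQ
  linear_combination (60 * AZero * (9 - 8 * H + 3 * H ^ 2) * (s - 6) * H ^ 2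
    * (10 - 12 * H + 6 * H ^ 2 - H ^ 3) ^ 2) * hsqrt

end RealParametrization

section Expansions

open Filter Topology Set

/-- `c` is the sequence of Taylor coefficients at `0` of the function of `u` that is parametrized
near `u = 0` by `G`, through `u = û(H)`. It is enough to record this for small `H > 0`. -/
def HasLocalExpansion (c : ℕ → ℝ) (G : ℝ → ℝ) : Prop :=
  ∀ᶠ H in 𝓝[>] 0, HasSum (fun p => c p * uReal H ^ p) (G H)

/-- The power series with coefficients `c` converges on `[0, u_c]` to the function of `u`
parametrized by `G`, through `u = û(H)` with `0 ≤ H ≤ 1`. -/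
def HasExpansion (c : ℕ → ℝ) (G : ℝ → ℝ) : Prop :=
  ∀ H ∈ Icc 0 1, HasSum (fun p => c p * uReal H ^ p) (G H)

/-- `z` is the double sequence of Taylor coefficients at `(0, 0)` of the function of `(u, v)` that
is parametrized by `ZReal` near `(0, 0)`, through `u = û(H)` and `v = û(K)`. It is enough to record
this for small `H > 0` and `K > 0`. -/
def HasBivariateExpansion (z : ℕ → ℕ → ℝ) : Prop :=
  ∀ᶠ HK in 𝓝[>] (0 : ℝ) ×ˢ 𝓝[>] (0 : ℝ),
    HasSum (fun pq : ℕ × ℕ => z pq.1 pq.2 * uReal HK.1 ^ pq.1 * uReal HK.2 ^ pq.2)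
      (ZReal HK.1 HK.2)

theorem eventually_norm_ofReal_lt {ρ : ℝ} (hρ : 0 < ρ) : ∀ᶠ H : ℝ in 𝓝[>] 0, ‖(H : ℂ)‖ < ρ := by
  filter_upwards [Ioo_mem_nhdsGT hρ] with H hH
  rw [Complex.norm_real, Real.norm_of_nonneg hH.1.le]
  exact hH.2

theorem hasLocalExpansion_of_uhat {c : ℕ → ℝ} {F : ℂ → ℂ} {G : ℝ → ℝ} (hFG : ∀ H : ℝ, F H = G H)
    {ρ : ℝ} (hρ : 0 < ρ)
    (h : ∀ H : ℂ, ‖H‖ < ρ → HasSum (fun p => (c p : ℂ) * uhat H ^ p) (F H)) :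
    HasLocalExpansion c G := by
  filter_upwards [eventually_norm_ofReal_lt hρ] with H hH
  have hsum := h H hH
  rw [uhat_ofReal, hFG] at hsum
  exact_mod_cast hsum

theorem hasBivariateExpansion_of_kernel {z : ℕ → ℕ → ℝ} {ρ : ℝ} (hρ : 0 < ρ)
    (hZ : ∀ H K : ℂ, ‖H‖ < ρ → ‖K‖ < ρ → ∃ ZHK : ℂ,
      HasSum (fun pq : ℕ × ℕ => (z pq.1 pq.2 : ℂ) * uhat H ^ pq.1 * uhat K ^ pq.2) ZHK ∧
      ((nuc : ℂ) * uhat K * uhat H - uhat H ^ 2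
          - ((nuc : ℂ) ^ 2 - 1) * (tc : ℂ) * uhat K * (Z0hat H + uhat H * Z1hat K))
          * (ZHK - Z0hat K)
        = uhat H ^ 2 * (Z0hat K - Z0hat H)
          + ((nuc : ℂ) ^ 2 - 1) * uhat H * uhat K
            * (uhat H ^ 2 - (tc : ℂ) * Z0hat H * Z1hat K)) :
    HasBivariateExpansion z := by
  have hnear : ∀ᶠ H : ℝ in 𝓝[>] 0, ‖(H : ℂ)‖ < ρ ∧ H ∈ Ioo 0 (1 / 3) :=
    (eventually_norm_ofReal_lt hρ).and (Ioo_mem_nhdsGT (by norm_num))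
  filter_upwards [hnear.prod_mk hnear] with ⟨H, K⟩ ⟨⟨hHρ, hH⟩, hKρ, hK⟩
  obtain ⟨S, hS, hkernel⟩ := hZ H K hHρ hKρ
  simp only [uhat_ofReal, Z0hat_ofReal, Z1hat_ofReal, ← Complex.ofReal_pow,
    ← Complex.ofReal_mul] at hS hkernel
  have hreal := Complex.summable_ofReal.1 hS.summable
  obtain rfl := hS.unique (Complex.hasSum_ofReal.2 hreal.hasSum)
  rw [← eq_ZReal_of_kernelEquation hH.1 hH.2 hK.1 (by linarith [hK.2])
    (show KernelEquation H K _ by unfold KernelEquation; exact_mod_cast hkernel)]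
  exact hreal.hasSum

theorem HasLocalExpansion.hasExpansion {c : ℕ → ℝ} {G : ℝ → ℝ} (h : HasLocalExpansion c G)
    (hc : ∀ p, 0 ≤ c p) (hG : AnalyticOnNhd ℝ G (Iic 1)) : HasExpansion c G :=
  hasSum_comp_of_nonneg hc one_pos (analyticOnNhd_uReal _) (fun _ => deriv_uReal_pos) uReal_zero
    hG h

theorem HasLocalExpansion.coeff_AReal {a : ℕ → ℝ} (h : HasLocalExpansion a AReal) :
    a 0 = AZero ∧ a 1 = AZero / (3 * uc) := by
  have hdenom : uc * (3 - 3 * (0 : ℝ) + 0 ^ 2) ^ 2 ≠ 0 := by norm_num [uc_pos.ne']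
  have hslope : ContinuousAt (fun H : ℝ => 3 * AZero / (uc * (3 - 3 * H + H ^ 2) ^ 2)) 0 := by
    fun_prop (disch := assumption)
  have hvalue : 3 * AZero / (uc * (3 - 3 * (0 : ℝ) + 0 ^ 2) ^ 2) = AZero / (3 * uc) := by
    field_simp
    norm_num [mul_comm]
  rw [← hvalue]
  exact coeff_zero_eq_and_coeff_one_eq tendsto_uReal_nhdsNE
    (hslope.tendsto.mono_left nhdsWithin_le_nhds)
    (h.mono fun H hH => AReal_eq_add_uReal_mul H ▸ hH)

variable {z : ℕ → ℕ → ℝ}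

theorem hasSum_row_zero_and_row_one {K : ℝ} (hK : K ≤ 1)
    (h : ∀ᶠ H in 𝓝[>] 0,
      HasSum (fun pq : ℕ × ℕ => z pq.1 pq.2 * uReal H ^ pq.1 * uReal K ^ pq.2) (ZReal H K)) :
    HasSum (fun q => z 0 q * uReal K ^ q) (Z0Real K) ∧
      HasSum (fun q => z 1 q * uReal K ^ q) (Z1Real K) := by
  obtain ⟨hzero, hone⟩ := coeff_zero_eq_and_coeff_one_eq tendsto_uReal_nhdsNE
    ((tendsto_ZReal_slope hK).mono_left nhdsWithin_le_nhds)
    (h.mono fun H hH => hasSum_rows hH)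
  obtain ⟨H, hH, hH0⟩ :=
    (h.and (tendsto_uReal_nhdsNE.eventually self_mem_nhdsWithin)).exists
  have hrow := summable_row hH0 hH.summable
  exact ⟨(hrow 0).hasSum_iff.2 hzero, (hrow 1).hasSum_iff.2 hone⟩

theorem HasBivariateExpansion.rows (h : HasBivariateExpansion z) :
    HasLocalExpansion (z 0) Z0Real ∧ HasLocalExpansion (z 1) Z1Real := by
  unfold HasLocalExpansion
  rw [← eventually_and]
  filter_upwards [(eventually_swap_iff.1 h).curry, Ioo_mem_nhdsGT one_pos] with K hK hK1
  exact hasSum_row_zero_and_row_one hK1.2.le hK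

theorem HasBivariateExpansion.eventually_hasSum_uc (h : HasBivariateExpansion z)
    (hz : ∀ p q, 0 ≤ z p q) :
    ∀ᶠ H in 𝓝[>] 0,
      HasSum (fun pq : ℕ × ℕ => z pq.1 pq.2 * uReal H ^ pq.1 * uc ^ pq.2) (ZcReal H) := by
  filter_upwards [h.curry, Ioo_mem_nhdsGT one_pos] with H hH hH1
  have hu := (uReal_pos hH1.1 hH1.2.le).le
  obtain ⟨K, hK, hK0⟩ :=
    (hH.and (tendsto_uReal_nhdsNE.eventually self_mem_nhdsWithin)).exists
  have hcolumns := hasSum_comp_of_nonneg (fun q => tsum_nonneg fun p =>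
    mul_nonneg (hz p q) (pow_nonneg hu p)) one_pos (analyticOnNhd_uReal _)
    (fun _ => deriv_uReal_pos) uReal_zero (analyticOnNhd_ZReal_right hH1.2)
    (hH.mono fun K hK => hasSum_rows (hasSum_prod_transpose hK)) 1 (right_mem_Icc.2 zero_le_one)
  rw [uReal_one, ZReal_one hH1.2.ne] at hcolumns
  exact hasSum_prod_transpose (hasSum_prod_of_hasSum_rows (fun q p => hz p q) uc_pos.le hu
    (summable_row hK0 (hasSum_prod_transpose hK).summable) hcolumns)

theorem HasBivariateExpansion.hasExpansion_uc (h : HasBivariateExpansion z)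
    (hz : ∀ p q, 0 ≤ z p q) : HasExpansion (fun p => ∑' q, z p q * uc ^ q) ZcReal :=
  HasLocalExpansion.hasExpansion ((h.eventually_hasSum_uc hz).mono fun _ hH => hasSum_rows hH)
    (fun p => tsum_nonneg fun q => mul_nonneg (hz p q) (pow_nonneg uc_pos.le q))
    (analyticOnNhd_ZcReal _)

theorem HasBivariateExpansion.summable_uc (h : HasBivariateExpansion z)
    (hz : ∀ p q, 0 ≤ z p q) :
    Summable fun pq : ℕ × ℕ => z pq.1 pq.2 * uc ^ pq.1 * uc ^ pq.2 := by
  obtain ⟨H, hH, hH0⟩ := ((h.eventually_hasSum_uc hz).and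
    (tendsto_uReal_nhdsNE.eventually self_mem_nhdsWithin)).exists
  have hrows := h.hasExpansion_uc hz 1 (right_mem_Icc.2 zero_le_one)
  rw [uReal_one] at hrows
  exact (hasSum_prod_of_hasSum_rows hz uc_pos.le uc_pos.le (summable_row hH0 hH.summable)
    hrows).summable

end Expansions

section FunctionalEquation

open Filter Topology Set

theorem eqOn_closedBall_of_eq_uReal {f g : ℂ → ℂ} (hf : DiffContOnCl ℂ f (Metric.ball 0 uc))
    (hg : DiffContOnCl ℂ g (Metric.ball 0 uc)) (hfg : ∀ H ∈ Icc 0 1, f (uReal H) = g (uReal H)) :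
    EqOn f g (Metric.closedBall 0 uc) := by
  have hcast : Tendsto Complex.ofReal (𝓝[≠] 0) (𝓝[≠] 0) :=
    Complex.continuous_ofReal.continuousWithinAt.tendsto_nhdsWithin
      fun _ hx => Complex.ofReal_ne_zero.2 hx
  refine eqOn_closedBall_of_frequently_eq uc_pos hf hg
    ((hcast.comp tendsto_uReal_nhdsNE).frequently (Eventually.frequently ?_))
  filter_upwards [Ioo_mem_nhdsGT one_pos] with H hH
  exact hfg H (Ioo_subset_Icc_self hH)

section HasExpansion

variable {c : ℕ → ℝ} {G : ℝ → ℝ}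

theorem HasExpansion.summable_norm_mul_uc_pow (h : HasExpansion c G) :
    Summable fun p => ‖(c p : ℂ)‖ * uc ^ p := by
  have hc := summable_norm_mul_abs_pow (h 1 (right_mem_Icc.2 zero_le_one)).summable
  rw [uReal_one, abs_of_pos uc_pos] at hc
  simpa only [Complex.norm_real] using hc

theorem HasExpansion.summable_norm (h : HasExpansion c G) {u : ℂ} (hu : ‖u‖ ≤ uc) :
    Summable fun p => ‖(c p : ℂ) * u ^ p‖ := by
  refine h.summable_norm_mul_uc_pow.of_nonneg_of_le (fun p => norm_nonneg _) fun p => ?_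
  rw [norm_mul, norm_pow]
  gcongr

theorem HasExpansion.diffContOnCl (h : HasExpansion c G) :
    DiffContOnCl ℂ (fun u => ∑' p, (c p : ℂ) * u ^ p) (Metric.ball 0 uc) :=
  diffContOnCl_tsum uc_pos h.summable_norm_mul_uc_pow

theorem HasExpansion.tsum_uReal (h : HasExpansion c G) {H : ℝ} (hH : H ∈ Icc 0 1) :
    ∑' p, (c p : ℂ) * (uReal H : ℂ) ^ p = G H := by
  exact_mod_cast congrArg Complex.ofReal (h H hH).tsum_eq

theorem HasExpansion.tsum_uc (h : HasExpansion c G) : ∑' p, (c p : ℂ) * (uc : ℂ) ^ p = G 1 :=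
  uReal_one ▸ h.tsum_uReal (right_mem_Icc.2 zero_le_one)

end HasExpansion

theorem diffContOnCl_clearedRHS {A Z₀ Z₁ Zc : ℂ → ℂ} {s : Set ℂ} (a₀ a₁ : ℂ)
    (hA : DiffContOnCl ℂ A s) (hZ₀ : DiffContOnCl ℂ Z₀ s) (hZ₁ : DiffContOnCl ℂ Z₁ s)
    (hZc : DiffContOnCl ℂ Zc s) :
    DiffContOnCl ℂ (fun u => clearedRHS a₀ a₁ u (A u) (Z₀ u) (Z₁ u) (Zc u)) s := by
  obtain ⟨⟨hA, hA'⟩, ⟨hZ₀, hZ₀'⟩, ⟨hZ₁, hZ₁'⟩, ⟨hZc, hZc'⟩⟩ := hA, hZ₀, hZ₁, hZc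
  unfold clearedRHS
  constructor <;> fun_prop

theorem tsum_mul_sq_eq_clearedRHS {a b₀ b₁ b : ℕ → ℝ} (ha : HasExpansion a AReal)
    (hb₀ : HasExpansion b₀ Z0Real) (hb₁ : HasExpansion b₁ Z1Real) (hb : HasExpansion b ZcReal)
    {u : ℂ} (hu : ‖u‖ ≤ uc) :
    (∑' p, (a p : ℂ) * u ^ p) * u ^ 2
      = clearedRHS AZero (AZero / (3 * uc) : ℝ) u (∑' p, (a p : ℂ) * u ^ p)
        (∑' p, (b₀ p : ℂ) * u ^ p) (∑' p, (b₁ p : ℂ) * u ^ p) (∑' p, (b p : ℂ) * u ^ p) := by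
  have hleft : DiffContOnCl ℂ (fun u => (∑' p, (a p : ℂ) * u ^ p) * u ^ 2) (Metric.ball 0 uc) :=
    ha.diffContOnCl.smul (differentiable_pow 2).diffContOnCl
  refine eqOn_closedBall_of_eq_uReal hleft (diffContOnCl_clearedRHS _ _ ha.diffContOnCl
    hb₀.diffContOnCl hb₁.diffContOnCl hb.diffContOnCl) (fun H hH => ?_)
    (mem_closedBall_zero_iff.2 hu)
  rw [ha.tsum_uReal hH, hb₀.tsum_uReal hH, hb₁.tsum_uReal hH, hb.tsum_uReal hH]
  exact AReal_mul_uReal_sq hH.2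

theorem eq_of_mul_sq_eq_clearedRHS {a₀ a₁ u A Z₀ Z₁ Zc : ℂ} (hu : u ≠ 0)
    (h : A * u ^ 2 = clearedRHS a₀ a₁ u A Z₀ Z₁ Zc) :
    A = tc * uc * ((A - a₀ - a₁ * u) / u ^ 2 + (Z1Real 1 + (Z₀ - 1) / u) * ((A - a₀) / u)
          + a₁ * ((Zc - Z0Real 1) / u - (Z₀ - 1) / u))
        + nuc * tc * (A / uc + ((Z0Real 1 - 1) / uc + Z₁) * A + a₀ * ((Zc - Z₀) / uc - Z₁)) := by
  refine mul_right_cancel₀ (pow_ne_zero 2 hu) (h.trans ?_)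
  unfold clearedRHS
  field_simp

theorem HasBivariateExpansion.summable_norm {z : ℕ → ℕ → ℝ} (h : HasBivariateExpansion z)
    (hz : ∀ p q, 0 ≤ z p q) {u : ℂ} (hu : ‖u‖ ≤ uc) :
    Summable fun pq : ℕ × ℕ => ‖(z pq.1 pq.2 : ℂ) * u ^ pq.1 * (uc : ℂ) ^ pq.2‖ := by
  refine (h.summable_uc hz).of_nonneg_of_le (fun _ => norm_nonneg _) fun pq => ?_
  have hcoeff := hz pq.1 pq.2
  have huc := uc_pos.le
  rw [norm_mul, norm_mul, norm_pow, norm_pow, Complex.norm_of_nonneg hcoeff,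
    Complex.norm_of_nonneg huc]
  gcongr

theorem tsum_prod_ofReal_eq_tsum_rows {z : ℕ → ℕ → ℝ} {v : ℝ} {u : ℂ}
    (h : Summable fun pq : ℕ × ℕ => (z pq.1 pq.2 : ℂ) * u ^ pq.1 * (v : ℂ) ^ pq.2) :
    ∑' pq : ℕ × ℕ, (z pq.1 pq.2 : ℂ) * u ^ pq.1 * (v : ℂ) ^ pq.2
      = ∑' p, ((∑' q, z p q * v ^ q : ℝ) : ℂ) * u ^ p := by
  push_cast
  exact (hasSum_rows (z := fun p q => (z p q : ℂ)) h.hasSum).tsum_eq.symm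

end FunctionalEquation

/-- the coefficient identity obtained from the singular expansion, valid for
every `u` with `0 < |u| ≤ u_c`.  Here `Z₀(u), Z₁(u), A(u)` are given by their absolutely
convergent power series, `Z(u,u_c) = Σ_{p,q} z_{p,q} u^p u_c^q`, `Z₀(u_c) = Ẑ₀(1)`,
`Z₁(u_c) = Ẑ₁(1)`, and the discrete derivatives are `ΔZ₀(u) = (Z₀(u) − 1)/u`,
`ΔA(u) = (A(u) − a₀)/u`, `Δ²A(u) = (A(u) − a₀ − a₁u)/u²`,
`ΔZ(u,u_c) = (Z(u,u_c) − Z(0,u_c))/u`. -/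
theorem statement9
    (ρ : ℝ) (hρ : 0 < ρ)
    (z : ℕ → ℕ → ℝ) (hz_nonneg : ∀ p q, 0 ≤ z p q)
    -- `z p 0` are the Taylor coefficients of `Z₀ = Ẑ₀ ∘ û⁻¹` at `0`
    (hz0 : ∀ H : ℂ, ‖H‖ < ρ →
      HasSum (fun p : ℕ => (z p 0 : ℂ) * uhat H ^ p) (Z0hat H))
    -- `z p q` are the Taylor coefficients at `(0,0)` of the solution `Z(u,v)` of the
    -- algebraic equation, expressed through the parametrization `u = û(H)`, `v = û(K)`
    (hZ : ∀ H K : ℂ, ‖H‖ < ρ → ‖K‖ < ρ → ∃ ZHK : ℂ,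
      HasSum (fun pq : ℕ × ℕ => (z pq.1 pq.2 : ℂ) * uhat H ^ pq.1 * uhat K ^ pq.2) ZHK ∧
      ((nuc : ℂ) * uhat K * uhat H - uhat H ^ 2
          - ((nuc : ℂ) ^ 2 - 1) * (tc : ℂ) * uhat K * (Z0hat H + uhat H * Z1hat K))
          * (ZHK - Z0hat K)
        = uhat H ^ 2 * (Z0hat K - Z0hat H)
          + ((nuc : ℂ) ^ 2 - 1) * uhat H * uhat K * (uhat H ^ 2 - (tc : ℂ) * Z0hat H * Z1hat K))
    (z1 : ℕ → ℝ)
    -- `z1 p` are the Taylor coefficients of `Z₁ = Ẑ₁ ∘ û⁻¹` at `0`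
    (hz1 : ∀ H : ℂ, ‖H‖ < ρ →
      HasSum (fun p : ℕ => (z1 p : ℂ) * uhat H ^ p) (Z1hat H))
    (a : ℕ → ℝ) (ha_pos : ∀ p, 0 < a p)
    -- `a p` are the Taylor coefficients of `A = Â ∘ û⁻¹` at `0`
    (hA : ∀ H : ℂ, ‖H‖ < ρ →
      HasSum (fun p : ℕ => (a p : ℂ) * uhat H ^ p) (Ahat H))
    :
    ∀ u : ℂ, 0 < ‖u‖ → ‖u‖ ≤ uc →
      Summable (fun pq : ℕ × ℕ => ‖(z pq.1 pq.2 : ℂ) * u ^ pq.1 * ((uc : ℝ) : ℂ) ^ pq.2‖) ∧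
      Summable (fun p : ℕ => ‖(z p 0 : ℂ) * u ^ p‖) ∧
      Summable (fun p : ℕ => ‖(z1 p : ℂ) * u ^ p‖) ∧
      Summable (fun p : ℕ => ‖(a p : ℂ) * u ^ p‖) ∧
      (∑' p : ℕ, (a p : ℂ) * u ^ p) =
        (tc : ℂ) * (uc : ℂ) *
          ( ((∑' p : ℕ, (a p : ℂ) * u ^ p) - (a 0 : ℂ) - (a 1 : ℂ) * u) / u ^ 2
            + (Z1hat 1 + ((∑' p : ℕ, (z p 0 : ℂ) * u ^ p) - 1) / u)
                * (((∑' p : ℕ, (a p : ℂ) * u ^ p) - (a 0 : ℂ)) / u)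
            + (a 1 : ℂ) *
                ( ((∑' pq : ℕ × ℕ, (z pq.1 pq.2 : ℂ) * u ^ pq.1 * (uc : ℂ) ^ pq.2)
                    - (∑' q : ℕ, (z 0 q : ℂ) * (uc : ℂ) ^ q)) / u
                  - ((∑' p : ℕ, (z p 0 : ℂ) * u ^ p) - 1) / u ) )
        + (nuc : ℂ) * (tc : ℂ) *
          ( (∑' p : ℕ, (a p : ℂ) * u ^ p) / (uc : ℂ)
            + ((Z0hat 1 - 1) / (uc : ℂ) + (∑' p : ℕ, (z1 p : ℂ) * u ^ p))
                * (∑' p : ℕ, (a p : ℂ) * u ^ p)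
            + (a 0 : ℂ) *
                ( ((∑' pq : ℕ × ℕ, (z pq.1 pq.2 : ℂ) * u ^ pq.1 * (uc : ℂ) ^ pq.2)
                    - (∑' p : ℕ, (z p 0 : ℂ) * u ^ p)) / (uc : ℂ)
                  - (∑' p : ℕ, (z1 p : ℂ) * u ^ p) ) ) := by
  have hbivariate := hasBivariateExpansion_of_kernel hρ hZ
  obtain ⟨hrow_zero, hrow_one⟩ := hbivariate.rows
  obtain rfl : z1 = z 1 := coeff_eq_of_eventually_hasSum tendsto_uReal_nhdsNE
    (hasLocalExpansion_of_uhat Z1hat_ofReal hρ hz1) hrow_one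
  have hZ₀ := (hasLocalExpansion_of_uhat Z0hat_ofReal hρ hz0).hasExpansion
    (fun p => hz_nonneg p 0) (analyticOnNhd_Z0Real _)
  have hZ₁ := hrow_one.hasExpansion (hz_nonneg 1) analyticOnNhd_Z1Real
  have hAlocal := hasLocalExpansion_of_uhat Ahat_ofReal hρ hA
  have hAglobal := hAlocal.hasExpansion (fun p => (ha_pos p).le) (analyticOnNhd_AReal _)
  have hedge := (hrow_zero.hasExpansion (hz_nonneg 0) (analyticOnNhd_Z0Real _)).tsum_uc
  intro u hu0 hu
  have hdouble := hbivariate.summable_norm hz_nonneg hu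
  refine ⟨hdouble, hZ₀.summable_norm hu, hZ₁.summable_norm hu, hAglobal.summable_norm hu, ?_⟩
  rw [tsum_prod_ofReal_eq_tsum_rows hdouble.of_norm, hedge, ← Complex.ofReal_one, Z0hat_ofReal,
    Z1hat_ofReal, Complex.ofReal_one, hAlocal.coeff_AReal.1, hAlocal.coeff_AReal.2]
  exact eq_of_mul_sq_eq_clearedRHS (norm_pos_iff.1 hu0)
    (tsum_mul_sq_eq_clearedRHS hAglobal hZ₀ hZ₁ (hbivariate.hasExpansion_uc hz_nonneg) hu)
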